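/- Let X be an analytic Hausdorff space (a Hausdorff topological space that is empty or a continuous image of ℕ^ℕ) and μ a Borel measure on X with μ(X) < ∞. Let (Y, d) be a complete separable metric space and h a continuous Hausdorff function with h(0) = 0 such that at least one of the following holds: (a) h is of finite order; (b) Y has finite structural dimension; (c) Y is ultrametric. Suppose f : X → Y is Borel measurable and satisfies Luzin's condition (N) in the sense that μ(N) = 0 implies H^h(f(N)) = 0 for every N ⊆ X. Then f(X) is σ-finite with respect to H^h. -/

import Mathlib

open MeasureTheory Set Filter Topology
open scoped NNReal ENNReal

universe u v

/-- A Hausdorff (gauge) function `h : [0,∞) → [0,∞]`: nondecreasing, right-continuous,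
and positive on positive arguments. -/
structure IsHausdorffFunction (h : ℝ≥0 → ℝ≥0∞) : Prop where
  mono : Monotone h
  right_continuous : ∀ t : ℝ≥0, ContinuousWithinAt h (Set.Ici t) t
  pos : ∀ t : ℝ≥0, 0 < t → 0 < h t

/-- `h` is of finite order: `limsup_{t→0+} h(3t)/h(t) < ∞`. -/
def FiniteOrder (h : ℝ≥0 → ℝ≥0∞) : Prop :=
  Filter.limsup (fun t : ℝ≥0 => h (3 * t) / h t) (nhdsWithin 0 (Set.Ioi 0)) < ⊤

/-- The Hausdorff (outer) measure built from the gauge `h`: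
`H^h(E) = sup_{δ>0} inf { Σ h(diam Uᵢ) : E ⊆ ⋃ Uᵢ, diam Uᵢ ≤ δ }`. -/
noncomputable def hausdorffM {Z : Type*} [EMetricSpace Z] (h : ℝ≥0 → ℝ≥0∞) :
    MeasureTheory.OuterMeasure Z :=
  MeasureTheory.OuterMeasure.mkMetric (fun d => h d.toNNReal)

/-- A set `S` is σ-finite with respect to an outer measure `μ` if it is a countable union
of Carathéodory-measurable sets of finite measure. -/
def SigmaFiniteSet {Z : Type*} (μ : MeasureTheory.OuterMeasure Z) (S : Set Z) : Prop :=
  ∃ A : ℕ → Set Z, (∀ n, μ.IsCaratheodory (A n) ∧ μ (A n) < ⊤) ∧ S = ⋃ n, A n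

/-- A metric space has finite structural dimension if for every `ξ > 0` there are `N` and
`δ₀ > 0` such that every set of diameter `δ ≤ δ₀` can be covered by `N` sets of diameter
at most `ξ·δ`. -/
def FiniteStructuralDim (Z : Type*) [EMetricSpace Z] : Prop :=
  ∀ ξ : ℝ≥0, 0 < ξ → ∃ (N : ℕ) (δ₀ : ℝ≥0), 0 < δ₀ ∧
    ∀ s : Set Z, EMetric.diam s ≤ δ₀ →
      ∃ U : Fin N → Set Z, s ⊆ ⋃ i, U i ∧ ∀ i, EMetric.diam (U i) ≤ ξ * EMetric.diam s

/-- Property (H) for a subspace `Y` of the complete separable metric space `Z`. -/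
structure PropertyH {Z : Type*} [MetricSpace Z] (Y : Set Z) (h : ℝ≥0 → ℝ≥0∞) : Prop where
  complete : CompleteSpace Z
  separable : TopologicalSpace.SeparableSpace Z
  analytic : MeasureTheory.AnalyticSet Y
  hausdorff : IsHausdorffFunction h
  cont : Continuous h
  zero : h 0 = 0
  alt : FiniteOrder h ∨ FiniteStructuralDim Z ∨ ∀ x y z : Z, dist x z ≤ max (dist x y) (dist y z)

/-- Property (H∞): property (H) together with non-σ-finiteness of `Y` w.r.t. `H^h`. -/
def PropertyHInf {Z : Type*} [MetricSpace Z] (Y : Set Z) (h : ℝ≥0 → ℝ≥0∞) : Prop :=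
  PropertyH Y h ∧ ¬ SigmaFiniteSet (hausdorffM h) Y

/-- Property (Aκ): `X` is a union of κ-many measurable sets of finite measure, and
κ-many null sets always union to a null set. -/
def PropertyA {X : Type u} (μ : MeasureTheory.OuterMeasure X) (κ : Cardinal.{u}) : Prop :=
  (∃ (ι : Type u) (A : ι → Set X), Cardinal.mk ι = κ ∧ (⋃ i, A i) = Set.univ ∧
      ∀ i, μ.IsCaratheodory (A i) ∧ μ (A i) < ⊤) ∧
  ∀ (ι : Type u) (A : ι → Set X), Cardinal.mk ι = κ → (∀ i, μ (A i) = 0) → μ (⋃ i, A i) = 0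

/-- A set is perfect if it is closed and every open set meeting it meets it in an
infinite set. -/
def PerfectSet {X : Type*} [TopologicalSpace X] (C : Set X) : Prop :=
  IsClosed C ∧ ∀ O : Set X, IsOpen O → (O ∩ C).Nonempty → (O ∩ C).Infinite

/-- The gauge `d ↦ d^s`. -/
noncomputable def sGauge (s : ℝ≥0) : ℝ≥0 → ℝ≥0∞ := fun d => (d : ℝ≥0∞) ^ (s : ℝ)

/-- Hausdorff–Besicovitch dimension: the supremum of all `s ≥ 0` with `H^{d^s}(E) > 0`. -/
noncomputable def hDim {Z : Type*} [EMetricSpace Z] (E : Set Z) : ℝ≥0∞ :=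
  ⨆ (s : ℝ≥0) (_ : 0 < hausdorffM (sGauge s) E), (s : ℝ≥0∞)

/-!
Let `ν` be the push-forward of `μ` to `Y`. A Vitali-type covering argument, available under each of
the three alternatives, shows that the set of points where the upper `h`-density of `ν` exceeds a
given positive number has finite `H^h` measure. Let `W` be a compact piece of `f(X)` with the points
of positive upper density removed. If `W` had positive `ν`-measure, then by an Egorov argument it
would contain a compact set `C` of positive measure on which `ν U = o(h (diam U))` uniformly in `U`.
Since such a restriction has no atoms, one can repeatedly discard half of its mass, spread evenly at
rapidly decreasing scales; what remains of `C` in the end is `ν`-null, but the renormalized measures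
bound its `H^h` measure away from `0`, contradicting condition (N). So `W` is `ν`-null, and hence
`H^h`-null, again by condition (N).
-/

section Sierpinski

lemma continuous_measureReal_Iic (ρ : Measure ℝ) [IsFiniteMeasure ρ] [NullSingletonClass ρ] :
    Continuous fun b : ℝ => ρ.real (Iic b) := by
  have hprim : Continuous fun b : ℝ => ∫ _ in (0 : ℝ)..b, (1 : ℝ) ∂ρ :=
    intervalIntegral.continuous_primitive
      (fun _ _ => (integrable_const (1 : ℝ)).intervalIntegrable) 0
  convert hprim.add_const (ρ.real (Iic 0)) using 2 with b
  rw [← intervalIntegral.integral_Iic_sub_Iic (integrable_const (1 : ℝ)).integrableOn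
    (integrable_const (1 : ℝ)).integrableOn]
  simp

lemma exists_measure_Iic_eq (ρ : Measure ℝ) [IsFiniteMeasure ρ] [NullSingletonClass ρ]
    {c : ℝ≥0∞} (hc₀ : 0 < c) (hc : c < ρ univ) : ∃ b : ℝ, ρ (Iic b) = c := by
  have hbot : Tendsto (fun b : ℝ => ρ (Iic b)) atBot (𝓝 0) := by
    have := tendsto_measure_iInter_atBot (μ := ρ) (s := fun b : ℝ => Iic b)
      (fun _ => measurableSet_Iic.nullMeasurableSet) monotone_Iic ⟨0, measure_ne_top _ _⟩
    rwa [iInter_Iic_eq_empty_iff.2 (by simp [not_bddBelow_univ]), measure_empty] at this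
  have hcont : Continuous fun b : ℝ => ρ (Iic b) := by
    convert ENNReal.continuous_ofReal.comp (continuous_measureReal_Iic ρ) with b
    exact (ofReal_measureReal).symm
  exact mem_range_of_exists_le_of_exists_ge hcont
    (hbot.eventually (ge_mem_nhds hc₀)).exists
    ((tendsto_measure_Iic_atTop ρ).eventually (le_mem_nhds hc)).exists

lemma exists_measurable_injective_real (α : Type*) [MeasurableSpace α]
    [MeasurableSpace.CountablySeparated α] : ∃ φ : α → ℝ, Measurable φ ∧ φ.Injective := by
  obtain ⟨ψ, hψ, hψ_inj⟩ := MeasurableSpace.measurable_injection_nat_bool_of_countablySeparated α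
  obtain ⟨ι, hι⟩ := exists_measurableEmbedding_real (ℕ → Bool)
  exact ⟨ι ∘ ψ, hι.measurable.comp hψ, hι.injective.comp hψ_inj⟩

/- Sierpiński's theorem: a measurable injection into `ℝ` reduces it to the intermediate value
theorem for a cumulative distribution function. -/
lemma exists_subset_measure_eq {α : Type*} [MeasurableSpace α]
    [MeasurableSpace.CountablySeparated α] (κ : Measure α) [IsFiniteMeasure κ]
    [NullSingletonClass κ] {P : Set α} (hP : MeasurableSet P) {c : ℝ≥0∞} (hc : c ≤ κ P) :
    ∃ E ⊆ P, MeasurableSet E ∧ κ E = c := by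
  rcases eq_or_ne c 0 with rfl | hc₀
  · exact ⟨∅, empty_subset P, MeasurableSet.empty, measure_empty⟩
  rcases hc.eq_or_lt with rfl | hcP
  · exact ⟨P, Subset.rfl, hP, rfl⟩
  obtain ⟨φ, hφ, hφ_inj⟩ := exists_measurable_injective_real α
  have hmap : ∀ s, MeasurableSet s → (κ.restrict P).map φ s = κ (φ ⁻¹' s ∩ P) := fun s hs => by
    rw [Measure.map_apply hφ hs, Measure.restrict_apply (hφ hs)]
  have hnull : NullSingletonClass ((κ.restrict P).map φ) := ⟨fun x => by
    rw [hmap _ (measurableSet_singleton x)]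
    exact measure_mono_null inter_subset_left
      ((subsingleton_singleton.preimage hφ_inj).measure_zero κ)⟩
  obtain ⟨b, hb⟩ := exists_measure_Iic_eq ((κ.restrict P).map φ) (pos_iff_ne_zero.2 hc₀)
    (by simpa [hmap] using hcP)
  exact ⟨φ ⁻¹' Iic b ∩ P, inter_subset_right, (hφ measurableSet_Iic).inter hP,
    (hmap _ measurableSet_Iic).symm.trans hb⟩

end Sierpinski

/-- A sequence of compact sets obtained by repeatedly discarding about half of the mass of `κ`,
evenly at the scales `τ n - τ (n + 1)`; the constant `r` keeps a positive amount of the mass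
`2 ^ n * κ (K n)`, which would be constant if each step kept exactly one half. -/
structure IsHalvingSequence {Y : Type*} [PseudoMetricSpace Y] [MeasurableSpace Y] (κ : Measure Y)
    (τ : ℕ → ℝ) (r : ℝ≥0∞) (K : ℕ → Set Y) : Prop where
  isCompact : ∀ n, IsCompact (K n)
  succ_subset : ∀ n, K (n + 1) ⊆ K n
  lt_measure : ∀ n, r / 2 ^ n < κ (K n)
  two_mul_measure_inter_le : ∀ n U,
    2 * κ (K (n + 1) ∩ U) ≤ κ (K n ∩ Metric.cthickening (τ n - τ (n + 1)) U)

namespace IsHalvingSequence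

variable {Y : Type*} [PseudoMetricSpace Y] [MeasurableSpace Y] {κ : Measure Y}
  {τ : ℕ → ℝ} {r : ℝ≥0∞} {K : ℕ → Set Y}

lemma antitone (hK : IsHalvingSequence κ τ r K) : Antitone K :=
  antitone_nat_of_succ_le hK.succ_subset

lemma le_two_pow_mul_measure (hK : IsHalvingSequence κ τ r K) (n : ℕ) :
    r ≤ 2 ^ n * κ (K n) :=
  (ENNReal.div_le_iff' (by simp) (by simp)).1 (hK.lt_measure n).le

lemma two_pow_mul_measure_inter_le (hK : IsHalvingSequence κ τ r K) (hτ : Antitone τ)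
    {n m : ℕ} (hnm : n ≤ m) (U : Set Y) :
    2 ^ m * κ (K m ∩ U) ≤ 2 ^ n * κ (K n ∩ Metric.cthickening (τ n - τ m) U) := by
  induction m, hnm using Nat.le_induction generalizing U with
  | base => gcongr; exact Metric.self_subset_cthickening U
  | succ m hnm ih =>
    calc 2 ^ (m + 1) * κ (K (m + 1) ∩ U) = 2 ^ m * (2 * κ (K (m + 1) ∩ U)) := by ring
      _ ≤ 2 ^ m * κ (K m ∩ Metric.cthickening (τ m - τ (m + 1)) U) := by
        gcongr; exact hK.two_mul_measure_inter_le m U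
      _ ≤ _ := ih _
      _ ≤ 2 ^ n * κ (K n ∩ Metric.cthickening (τ n - τ (m + 1)) U) := by
        gcongr
        refine (Metric.cthickening_cthickening_subset (sub_nonneg.2 (hτ hnm))
          (sub_nonneg.2 (hτ m.le_succ)) U).trans_eq ?_
        rw [sub_add_sub_cancel]

lemma measure_iInter [IsFiniteMeasure κ] (hK : IsHalvingSequence κ τ r K) (hτ : Antitone τ) :
    κ (⋂ n, K n) = 0 := by
  have hle : ∀ n : ℕ, κ (⋂ n, K n) ≤ κ (K 0) / 2 ^ n := fun n => by
    rw [ENNReal.le_div_iff_mul_le (by simp) (by simp), mul_comm]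
    calc 2 ^ n * κ (⋂ n, K n) ≤ 2 ^ n * κ (K n ∩ univ) := by
          rw [inter_univ]; gcongr; exact iInter_subset K n
      _ ≤ _ := hK.two_pow_mul_measure_inter_le hτ n.zero_le univ
      _ ≤ κ (K 0) := by simpa using measure_mono inter_subset_left
  have hlim : Tendsto (fun n : ℕ => κ (K 0) / 2 ^ n) atTop (𝓝 0) := by
    simpa [div_eq_mul_inv, ENNReal.inv_pow] using ENNReal.Tendsto.const_mul
      (ENNReal.tendsto_pow_atTop_nhds_zero_of_lt_one ENNReal.one_half_lt_one)
      (Or.inr (measure_ne_top κ (K 0)))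
  exact nonpos_iff_eq_zero.1 (ge_of_tendsto' hlim hle)

end IsHalvingSequence

section Halving

variable {Y : Type*} [MetricSpace Y] [TopologicalSpace.SeparableSpace Y] [MeasurableSpace Y]
  [BorelSpace Y] (κ : Measure Y) [IsFiniteMeasure κ] [NullSingletonClass κ]

lemma exists_measurable_half_measure_inter_le {K : Set Y} (hK : MeasurableSet K) {δ : ℝ}
    (hδ : 0 < δ) : ∃ E ⊆ K, MeasurableSet E ∧ 2 * κ E = κ K ∧
      ∀ U, 2 * κ (E ∩ U) ≤ κ (K ∩ Metric.cthickening δ U) := by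
  have : SecondCountableTopology Y := UniformSpace.secondCountable_of_separable Y
  obtain ⟨P, hPm, hPb, hPdiam, hPU, hPd⟩ :=
    SeparableSpace.exists_measurable_partition_diam_le Y hδ
  have hKPm : ∀ n, MeasurableSet (K ∩ P n) := fun n => hK.inter (hPm n)
  choose E hEP hEm hE using fun n =>
    exists_subset_measure_eq κ (hKPm n) (c := κ (K ∩ P n) / 2) ENNReal.half_le_self
  have hhalf : ∀ J : Set ℕ, 2 * κ (⋃ n ∈ J, E n) = κ (⋃ n ∈ J, K ∩ P n) := fun J => by
    have hKPd : J.PairwiseDisjoint fun n => K ∩ P n := fun i _ j _ hij =>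
      (hPd hij).mono inter_subset_right inter_subset_right
    rw [measure_biUnion J.to_countable (hKPd.mono hEP) fun n _ => hEm n,
      measure_biUnion J.to_countable hKPd fun n _ => hKPm n, ← ENNReal.tsum_mul_left]
    simp only [hE, ENNReal.mul_div_cancel two_ne_zero ENNReal.ofNat_ne_top]
  refine ⟨⋃ n, E n, iUnion_subset fun n => (hEP n).trans inter_subset_left,
    MeasurableSet.iUnion hEm, by simpa [← inter_iUnion, hPU] using hhalf univ, fun U => ?_⟩
  have hsub : (⋃ n, E n) ∩ U ⊆ ⋃ n ∈ {n | (P n ∩ U).Nonempty}, E n := by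
    rintro x ⟨hx, hxU⟩
    obtain ⟨n, hn⟩ := mem_iUnion.1 hx
    exact mem_biUnion (show (P n ∩ U).Nonempty from ⟨x, (hEP n hn).2, hxU⟩) hn
  calc 2 * κ ((⋃ n, E n) ∩ U) ≤ κ (⋃ n ∈ {n | (P n ∩ U).Nonempty}, K ∩ P n) :=
        (mul_le_mul_right (measure_mono hsub) 2).trans_eq (hhalf _)
    _ ≤ κ (K ∩ Metric.cthickening δ U) := by
        refine measure_mono (iUnion₂_subset ?_)
        rintro n ⟨y, hy, hyU⟩
        refine inter_subset_inter_right K fun x hx => ?_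
        exact Metric.mem_cthickening_of_dist_le x y δ U hyU
          ((Metric.dist_le_diam_of_mem (hPb n) hx hy).trans (hPdiam n))

lemma exists_isCompact_half_measure_inter_le {K : Set Y} (hK : IsCompact K) {δ : ℝ}
    (hδ : 0 < δ) {r : ℝ≥0∞} (hr : r < κ K) : ∃ K' ⊆ K, IsCompact K' ∧ r / 2 < κ K' ∧
      ∀ U, 2 * κ (K' ∩ U) ≤ κ (K ∩ Metric.cthickening δ U) := by
  obtain ⟨E, hEK, hEm, hE, hEU⟩ :=
    exists_measurable_half_measure_inter_le κ hK.measurableSet hδ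
  have hrE : r / 2 < κ E :=
    ENNReal.div_lt_of_lt_mul' (hE ▸ hr)
  obtain ⟨K', hK'E, hK'c, hrK'⟩ := hEm.exists_lt_isClosed_of_ne_top (measure_ne_top κ E) hrE
  exact ⟨K', hK'E.trans hEK, hK.of_isClosed_subset hK'c (hK'E.trans hEK), hrK', fun U =>
    (by gcongr : 2 * κ (K' ∩ U) ≤ 2 * κ (E ∩ U)).trans (hEU U)⟩

lemma exists_isHalvingSequence {τ : ℕ → ℝ} (hτ : StrictAnti τ) {r : ℝ≥0∞} {C : Set Y}
    (hC : IsCompact C) (hr : r < κ C) : ∃ K, K 0 = C ∧ IsHalvingSequence κ τ r K := by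
  choose! next hsub hcomp hlt hinter using
    fun (n : ℕ) (K : Set Y) (hK : IsCompact K ∧ r / 2 ^ n < κ K) =>
      exists_isCompact_half_measure_inter_le κ hK.1 (sub_pos.2 (hτ n.lt_succ_self)) hK.2
  let K : ℕ → Set Y := fun n => Nat.rec C next n
  have hK : ∀ n, IsCompact (K n) ∧ r / 2 ^ n < κ (K n) := fun n => by
    induction n with
    | zero => simpa [K] using ⟨hC, hr⟩
    | succ n ih =>
      refine ⟨hcomp n _ ih, ?_⟩
      have hhalf : r / 2 ^ (n + 1) = r / 2 ^ n / 2 := by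
        simp only [div_eq_mul_inv, ENNReal.inv_pow]
        ring
      exact hhalf ▸ hlt n _ ih
  exact ⟨K, rfl, fun n => (hK n).1, fun n => hsub n _ (hK n), fun n => (hK n).2,
    fun n => hinter n _ (hK n)⟩

end Halving

section Gauge

variable {h : ℝ≥0 → ℝ≥0∞}

lemma eventually_forall_Icc_map_add_two_mul_le (hcont : Continuous h) {a b : ℝ≥0}
    (hab : ∀ d ∈ Icc a b, h d ≠ 0 ∧ h d ≠ ⊤) :
    ∀ᶠ η in 𝓝 (0 : ℝ≥0), ∀ d ∈ Icc a b, h (d + 2 * η) ≤ 2 * h d := by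
  refine isCompact_Icc.eventually_forall_of_forall_eventually fun d hd => ?_
  have hopen : IsOpen {z : ℝ≥0 × ℝ≥0 | h (z.2 + 2 * z.1) < 2 * h z.2} :=
    isOpen_lt (hcont.comp (by fun_prop))
      ((ENNReal.continuous_const_mul ENNReal.ofNat_ne_top).comp (hcont.comp continuous_snd))
  have hmem : h (d + 2 * 0) < 2 * h d := by
    simpa [two_mul] using ENNReal.lt_add_right (hab d hd).2 (hab d hd).1
  filter_upwards [hopen.mem_nhds hmem] with z hz using le_of_lt hz

lemma eventually_lt_top_of_map_zero (hcont : Continuous h) (h0 : h 0 = 0) :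
    ∀ᶠ d in 𝓝 (0 : ℝ≥0), h d < ⊤ :=
  (hcont.tendsto 0).eventually (gt_mem_nhds (by simp [h0]))

lemma exists_strictAnti_pos_le {η : ℕ → ℝ≥0} (hη : ∀ n, 0 < η n) :
    ∃ τ : ℕ → ℝ≥0, StrictAnti τ ∧ (∀ n, 0 < τ n) ∧ ∀ n, τ n ≤ η n := by
  let τ : ℕ → ℝ≥0 := fun n => Nat.rec (η 0) (fun n t => min (t / 2) (η (n + 1))) n
  have hpos : ∀ n, 0 < τ n := fun n => by
    induction n with
    | zero => exact hη 0
    | succ n ih => exact lt_min (half_pos ih) (hη _)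
  refine ⟨τ, strictAnti_nat_of_succ_lt fun n => ?_, hpos, fun n => ?_⟩
  · exact (min_le_left _ _).trans_lt (NNReal.half_lt_self (hpos n).ne')
  · cases n with
    | zero => exact le_rfl
    | succ n => exact min_le_right _ _

section MetricSpace

variable {Z : Type*} [MetricSpace Z]

lemma exists_isOpen_superset_map_le_add (hcont : Continuous h) {U : Set Z} {d r : ℝ≥0}
    (hU : Metric.ediam U ≤ d) (hdr : d < r) {e : ℝ≥0∞} (he : e ≠ 0) :
    ∃ V ⊇ U, IsOpen V ∧ ∃ d' : ℝ≥0, Metric.ediam V ≤ d' ∧ 0 < d' ∧ d' ≤ r ∧ h d' ≤ h d + e := by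
  have hadd : Tendsto (fun η : ℝ≥0 => d + 2 * η) (𝓝[>] 0) (𝓝 d) :=
    ((by fun_prop : Continuous fun η : ℝ≥0 => d + 2 * η).tendsto' 0 _ (by simp)).mono_left
      nhdsWithin_le_nhds
  have hle : ∀ᶠ x in 𝓝 d, h x ≤ h d + e := by
    rcases eq_or_ne (h d) ⊤ with htop | htop
    · simp [htop]
    · exact (hcont.tendsto d).eventually (ge_mem_nhds (ENNReal.lt_add_right htop he))
  obtain ⟨η, ⟨hηh, hηr⟩, hη⟩ := ((hadd.eventually (hle.and (ge_mem_nhds hdr))).and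
    eventually_mem_nhdsWithin).exists
  have hη' : 0 < η := hη
  refine ⟨Metric.thickening η U, Metric.self_subset_thickening hη' U, Metric.isOpen_thickening,
    d + 2 * η, ?_, by positivity, hηr, hηh⟩
  push_cast
  exact (Metric.ediam_thickening_le η).trans (by gcongr)

lemma le_hausdorffM_of_forall_isOpen_cover (hcont : Continuous h) (h0 : h 0 = 0) {r : ℝ≥0}
    (hr : 0 < r) {b : ℝ≥0∞} {L : Set Z}
    (hb : ∀ (V : ℕ → Set Z) (d : ℕ → ℝ≥0), (∀ i, IsOpen (V i)) → (∀ i, Metric.ediam (V i) ≤ d i) →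
      (∀ i, 0 < d i ∧ d i ≤ r) → L ⊆ ⋃ i, V i → b ≤ ∑' i, h (d i)) :
    b ≤ hausdorffM h L := by
  borelize Z
  change b ≤ OuterMeasure.mkMetric (fun d => h d.toNNReal) L
  rw [OuterMeasure.coe_mkMetric, Measure.mkMetric_apply]
  refine le_iSup₂_of_le ((r / 2 : ℝ≥0) : ℝ≥0∞) (by positivity)
    (le_iInf₂ fun U hLU => le_iInf fun hU => ?_)
  lift (fun i => Metric.ediam (U i)) to ℕ → ℝ≥0 using fun i => ne_top_of_le_ne_top
    ENNReal.coe_ne_top (hU i) with d hd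
  have hUd : ∀ i, Metric.ediam (U i) = d i := fun i => (congrFun hd i).symm
  have hdr : ∀ i, d i < r := fun i =>
    (ENNReal.coe_le_coe.1 (hUd i ▸ hU i)).trans_lt (NNReal.half_lt_self hr.ne')
  have hterm : ∀ i, h (d i) ≤ ⨆ _ : (U i).Nonempty, h (Metric.ediam (U i)).toNNReal := fun i => by
    rcases (U i).eq_empty_or_nonempty with hi | hi
    · have : d i = 0 := by simpa [hi] using (hUd i).symm
      simp [this, h0]
    · simp [hi, hUd]
  refine le_trans (ENNReal.le_of_forall_pos_le_add fun ε hε _ => ?_)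
    (ENNReal.tsum_le_tsum hterm)
  obtain ⟨e, he, hesum⟩ :=
    ENNReal.exists_pos_sum_of_countable' (ENNReal.coe_ne_zero.2 hε.ne') ℕ
  choose V hUV hV d' hVd' hd'₀ hd'r hd'h using fun i =>
    exists_isOpen_superset_map_le_add hcont (hUd i).le (hdr i) (he i).ne'
  calc b ≤ ∑' i, h (d' i) :=
        hb V d' hV hVd' (fun i => ⟨hd'₀ i, hd'r i⟩) (hLU.trans (iUnion_mono hUV))
    _ ≤ ∑' i, (h (d i) + e i) := ENNReal.tsum_le_tsum hd'h
    _ ≤ ∑' i, h (d i) + ε := by rw [ENNReal.tsum_add]; gcongr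

/- The measures `ν m` need not converge: only finitely many members of an open cover of the
intersection matter, and these control `ν m (K m)` for all large `m`. -/
lemma le_hausdorffM_iInter [MeasurableSpace Z] (hcont : Continuous h) (h0 : h 0 = 0)
    {K : ℕ → Set Z} (hK : ∀ m, IsCompact (K m)) (hanti : Antitone K) {ν : ℕ → Measure Z}
    {b : ℝ≥0∞} (hb : ∀ m, b ≤ ν m (K m)) {r : ℝ≥0} (hr : 0 < r)
    (hν : ∀ d, 0 < d → d ≤ r → ∀ U : Set Z, Metric.ediam U ≤ d → ∀ᶠ m in atTop, ν m U ≤ h d) :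
    b ≤ hausdorffM h (⋂ m, K m) := by
  refine le_hausdorffM_of_forall_isOpen_cover hcont h0 hr fun V d hV hVd hd hcover => ?_
  obtain ⟨m₀, hm₀⟩ := exists_subset_nhds_of_isCompact' hanti.directed_ge hK
    (fun m => (hK m).isClosed) fun x hx => (isOpen_iUnion hV).mem_nhds (hcover hx)
  obtain ⟨t, ht⟩ := (hK m₀).elim_finite_subcover V hV hm₀
  obtain ⟨m, hm, hmV⟩ := ((eventually_ge_atTop m₀).and ((eventually_all_finset t).2 fun i _ =>
    hν (d i) (hd i).1 (hd i).2 (V i) (hVd i))).exists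
  calc b ≤ ν m (⋃ i ∈ t, V i) := (hb m).trans (measure_mono ((hanti hm).trans ht))
    _ ≤ ∑ i ∈ t, ν m (V i) := measure_biUnion_finset_le t V
    _ ≤ ∑ i ∈ t, h (d i) := Finset.sum_le_sum hmV
    _ ≤ ∑' i, h (d i) := ENNReal.sum_le_tsum t

end MetricSpace

end Gauge

/-- `κ U = o(h (diam U))` as `diam U → 0`, uniformly in `U`. The diameter is replaced by an upper
bound `d`, so that for `d = 0` the condition says that points are `κ`-null when `h 0 = 0`. -/
def IsLittleOGauge {Y : Type*} [PseudoEMetricSpace Y] [MeasurableSpace Y] (κ : Measure Y)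
    (h : ℝ≥0 → ℝ≥0∞) : Prop :=
  ∀ c : ℝ≥0, ∀ᶠ d : ℝ≥0 in 𝓝 0, ∀ U : Set Y, Metric.ediam U ≤ d → c * κ U ≤ h d

section LittleO

lemma exists_pos_forall_le_of_eventually {P : ℝ≥0 → Prop} (hP : ∀ᶠ d in 𝓝 0, P d) :
    ∃ σ, 0 < σ ∧ ∀ d ≤ σ, P d := by
  obtain ⟨ρ, hρ, hP⟩ := NNReal.nhds_zero_basis.eventually_iff.1 hP
  exact ⟨ρ / 2, half_pos hρ, fun d hd => hP (hd.trans_lt (NNReal.half_lt_self hρ.ne'))⟩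

lemma exists_mem_Ioc_succ_of_tendsto_zero {s : ℕ → ℝ≥0} (hs : Tendsto s atTop (𝓝 0)) {d : ℝ≥0}
    (hd₀ : 0 < d) (hd : d ≤ s 0) : ∃ n, d ∈ Ioc (s (n + 1)) (s n) := by
  classical
  have hex : ∃ k, s k < d := (hs.eventually (gt_mem_nhds hd₀)).exists
  obtain ⟨n, hn⟩ := Nat.exists_eq_succ_of_ne_zero
    fun h0 : Nat.find hex = 0 => hd.not_gt (h0 ▸ Nat.find_spec hex)
  exact ⟨n, by simpa [hn] using Nat.find_spec hex, not_lt.1 (Nat.find_min hex (by omega))⟩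

variable {Y : Type*} [MetricSpace Y] [MeasurableSpace Y] {κ : Measure Y} {h : ℝ≥0 → ℝ≥0∞}

lemma IsLittleOGauge.nullSingletonClass (hκ : IsLittleOGauge κ h) (h0 : h 0 = 0) :
    NullSingletonClass κ :=
  ⟨fun y => by simpa [h0] using (hκ 1).self_of_nhds {y} (by simp)⟩

lemma IsLittleOGauge.exists_scales (hκ : IsLittleOGauge κ h) (hcont : Continuous h)
    (h0 : h 0 = 0) (hpos : ∀ d, 0 < d → 0 < h d) :
    ∃ τ : ℕ → ℝ≥0, StrictAnti τ ∧ ∃ r : ℝ≥0, 0 < r ∧ ∀ d : ℝ≥0, 0 < d → d ≤ r →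
      ∃ n : ℕ, ∀ U : Set Y, Metric.ediam U ≤ d + 2 * τ n → 2 ^ n * κ U ≤ h d := by
  choose σ hσ₀ hσ using fun n : ℕ => exists_pos_forall_le_of_eventually
    ((hκ (2 ^ (n + 1))).and (eventually_lt_top_of_map_zero hcont h0))
  obtain ⟨s, -, hs₀, hs⟩ := exists_strictAnti_pos_le fun n : ℕ =>
    lt_min (half_pos (hσ₀ n)) (by positivity : 0 < 1 / ((n : ℝ≥0) + 1))
  have hs_lim : Tendsto s atTop (𝓝 0) := tendsto_of_tendsto_of_tendsto_of_le_of_le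
    tendsto_const_nhds tendsto_one_div_add_atTop_nhds_zero_nat
    (fun n => (hs₀ n).le) fun n => (hs n).trans (min_le_right _ _)
  have hsσ : ∀ n, s n ≤ σ n / 2 := fun n => (hs n).trans (min_le_left _ _)
  choose η hη₀ hη using fun n => exists_pos_forall_le_of_eventually
    (eventually_forall_Icc_map_add_two_mul_le hcont (a := s (n + 1)) (b := s n) fun d hd =>
      ⟨(hpos d ((hs₀ _).trans_le hd.1)).ne',
        (hσ n d ((hd.2.trans (hsσ n)).trans (half_le_self (hσ₀ n).le))).2.ne⟩)
  obtain ⟨τ, hτ_anti, -, hτ⟩ := exists_strictAnti_pos_le fun n =>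
    lt_min (hη₀ n) (half_pos (hs₀ n))
  refine ⟨τ, hτ_anti, s 0, hs₀ 0, fun d hd₀ hd => ?_⟩
  obtain ⟨n, hn⟩ := exists_mem_Ioc_succ_of_tendsto_zero hs_lim hd₀ hd
  refine ⟨n, fun U hU => ?_⟩
  have hdσ : d + 2 * τ n ≤ σ n :=
    calc d + 2 * τ n ≤ σ n / 2 + 2 * (σ n / 2 / 2) := by
          gcongr
          · exact hn.2.trans (hsσ n)
          · exact ((hτ n).trans (min_le_right _ _)).trans (by gcongr; exact hsσ n)
      _ = σ n := by ring
  have hdouble : 2 * (2 ^ n * κ U) ≤ 2 * h d :=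
    calc 2 * (2 ^ n * κ U) = ((2 ^ (n + 1) : ℝ≥0) : ℝ≥0∞) * κ U := by push_cast; ring
      _ ≤ h (d + 2 * τ n) := (hσ n _ hdσ).1 U (by exact_mod_cast hU)
      _ ≤ 2 * h d := hη n _ ((hτ n).trans (min_le_left _ _)) d (Ioc_subset_Icc_self hn)
  exact (ENNReal.mul_le_mul_iff_right two_ne_zero ENNReal.ofNat_ne_top).1 hdouble

theorem IsLittleOGauge.exists_null_subset_hausdorffM_ne_zero [TopologicalSpace.SeparableSpace Y]
    [BorelSpace Y] [IsFiniteMeasure κ] (hκ : IsLittleOGauge κ h) (hcont : Continuous h)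
    (h0 : h 0 = 0) (hpos : ∀ d, 0 < d → 0 < h d) {C : Set Y} (hC : IsCompact C)
    (hκC : κ C ≠ 0) : ∃ L ⊆ C, κ L = 0 ∧ hausdorffM h L ≠ 0 := by
  have := hκ.nullSingletonClass h0
  obtain ⟨τ, hτ, r, hr, hscale⟩ := hκ.exists_scales hcont h0 hpos
  obtain ⟨b, hb₀, hb⟩ := exists_between (pos_iff_ne_zero.2 hκC)
  have hτ' : StrictAnti fun n => (τ n : ℝ) := fun _ _ hnm => NNReal.coe_lt_coe.2 (hτ hnm)
  obtain ⟨K, rfl, hK⟩ := exists_isHalvingSequence κ hτ' hC hb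
  have hle : b ≤ hausdorffM h (⋂ n, K n) := by
    refine le_hausdorffM_iInter hcont h0 hK.isCompact hK.antitone
      (ν := fun n => (2 : ℝ≥0∞) ^ n • κ.restrict (K n)) (fun n => ?_) hr fun d hd₀ hd U hU => ?_
    · simpa using hK.le_two_pow_mul_measure n
    obtain ⟨n, hn⟩ := hscale d hd₀ hd
    filter_upwards [eventually_ge_atTop n] with m hm
    calc ((2 : ℝ≥0∞) ^ m • κ.restrict (K m)) U = 2 ^ m * κ (K m ∩ U) := by
          simp [Measure.restrict_apply' (hK.isCompact m).measurableSet, inter_comm]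
      _ ≤ 2 ^ n * κ (K n ∩ Metric.cthickening (τ n - τ m) U) :=
        hK.two_pow_mul_measure_inter_le hτ'.antitone hm U
      _ ≤ 2 ^ n * κ (Metric.cthickening (τ n) U) := by
        gcongr
        exact inter_subset_right.trans (Metric.cthickening_mono (by simp) U)
      _ ≤ h d := hn _ ((Metric.ediam_cthickening_le (τ n)).trans (by gcongr))
  exact ⟨_, iInter_subset K 0, hK.measure_iInter hτ'.antitone, (hb₀.trans_le hle).ne'⟩

end LittleO

/-- The size-`δ` Hausdorff content of a set: the infimum of `∑ h (diam Uᵢ)` over its countable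
covers by sets `Uᵢ` of diameter at most `δ`. -/
noncomputable def hausdorffContent {Y : Type*} [EMetricSpace Y] (h : ℝ≥0 → ℝ≥0∞) (δ : ℝ≥0∞) :
    OuterMeasure Y :=
  OuterMeasure.mkMetric'.pre (fun s => h (Metric.ediam s).toNNReal) δ

/-- The Vitali-type covering property shared by the three alternatives of the theorem: from a
family `t` of small balls, encoded by centre and radius, one can extract disjoint balls whose total
gauge controls the Hausdorff content of the set of all centres. -/
def HasVitaliCovering (Y : Type*) [MetricSpace Y] (h : ℝ≥0 → ℝ≥0∞) : Prop :=
  ∃ M : ℝ≥0∞, M ≠ ⊤ ∧ ∀ ρ : ℝ≥0, 0 < ρ → ∀ᶠ δ : ℝ≥0 in 𝓝 0,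
    ∀ t : Set (Y × ℝ≥0), (∀ a ∈ t, a.2 ∈ Ioc 0 δ) →
      ∃ u ⊆ t, u.PairwiseDisjoint (fun a => Metric.ball a.1 (a.2 : ℝ)) ∧
        hausdorffContent h ρ (Prod.fst '' t) ≤ M * ∑' b : u, h (b : Y × ℝ≥0).2

section HausdorffContent

variable {Y : Type*} [EMetricSpace Y] {h : ℝ≥0 → ℝ≥0∞}

lemma hausdorffContent_anti {δ ε : ℝ≥0∞} (hδε : δ ≤ ε) (s : Set Y) :
    hausdorffContent h ε s ≤ hausdorffContent h δ s :=
  OuterMeasure.mkMetric'.mono_pre _ hδε s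

lemma hausdorffContent_le (hh : Monotone h) {s : Set Y} {d : ℝ≥0} (hs : Metric.ediam s ≤ d) :
    hausdorffContent h d s ≤ h d :=
  (OuterMeasure.mkMetric'.pre_le hs).trans
    (hh (by simpa using ENNReal.toNNReal_mono ENNReal.coe_ne_top hs))

lemma hausdorffM_le_of_forall_hausdorffContent_le {s : Set Y} {b : ℝ≥0∞}
    (hb : ∀ ρ : ℝ≥0, 0 < ρ → hausdorffContent h ρ s ≤ b) : hausdorffM h s ≤ b := by
  refine le_of_tendsto (OuterMeasure.mkMetric'.tendsto_pre _ s) ?_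
  filter_upwards [Ioo_mem_nhdsGT one_pos] with ρ hρ
  lift ρ to ℝ≥0 using hρ.2.ne_top
  exact hb ρ (by exact_mod_cast hρ.1)

end HausdorffContent

lemma FiniteOrder.exists_eventually_map_three_mul_le {h : ℝ≥0 → ℝ≥0∞} (hfo : FiniteOrder h) :
    ∃ M : ℝ≥0∞, M ≠ ⊤ ∧ ∀ᶠ t : ℝ≥0 in 𝓝[>] 0, h (3 * t) ≤ M * h t := by
  obtain ⟨M, hM, hM_top⟩ := exists_between hfo
  refine ⟨M, hM_top.ne, (eventually_lt_of_limsup_lt hM).mono fun t ht => ?_⟩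
  exact (ENNReal.div_le_iff_le_mul (.inr hM_top.ne) (.inr (bot_le.trans_lt hM).ne')).1 ht.le

lemma FiniteOrder.exists_eventually_map_nine_mul_le {h : ℝ≥0 → ℝ≥0∞} (hfo : FiniteOrder h) :
    ∃ M : ℝ≥0∞, M ≠ ⊤ ∧ ∀ᶠ t : ℝ≥0 in 𝓝[>] 0, h (9 * t) ≤ M * h t := by
  obtain ⟨M, hM_top, hM⟩ := hfo.exists_eventually_map_three_mul_le
  have hlim : Tendsto (fun t : ℝ≥0 => 3 * t) (𝓝[>] 0) (𝓝[>] 0) :=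
    tendsto_nhdsWithin_iff.2 ⟨tendsto_nhdsWithin_of_tendsto_nhds
      (Continuous.tendsto' (by fun_prop) _ _ (mul_zero _)),
      eventually_mem_nhdsWithin.mono fun t ht => mul_pos three_pos (mem_Ioi.1 ht)⟩
  refine ⟨M * M, ENNReal.mul_ne_top hM_top hM_top, ?_⟩
  filter_upwards [hM, hlim.eventually hM] with t ht₁ ht₂
  calc h (9 * t) = h (3 * (3 * t)) := by ring_nf
    _ ≤ M * h (3 * t) := ht₂
    _ ≤ M * (M * h t) := by gcongr
    _ = M * M * h t := by ring

section VitaliCovering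

variable {Y : Type*} [MetricSpace Y] {h : ℝ≥0 → ℝ≥0∞}

lemma ediam_ball_four_mul_le (x : Y) (r : ℝ≥0) :
    Metric.ediam (Metric.ball x (4 * r : ℝ)) ≤ (8 * r : ℝ≥0) :=
  calc Metric.ediam (Metric.ball x (4 * r : ℝ))
      = Metric.ediam (Metric.eball x ((4 * r : ℝ≥0) : ℝ≥0∞)) := by
        simp only [Metric.eball_coe, NNReal.coe_mul, NNReal.coe_ofNat]
    _ ≤ 2 * ((4 * r : ℝ≥0) : ℝ≥0∞) := Metric.ediam_eball_le
    _ = (8 * r : ℝ≥0) := by push_cast; ring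

lemma countable_of_pairwiseDisjoint_ball [TopologicalSpace.SeparableSpace Y] {u : Set (Y × ℝ≥0)}
    (hu : u.PairwiseDisjoint fun a => Metric.ball a.1 (a.2 : ℝ)) (hpos : ∀ a ∈ u, 0 < a.2) :
    u.Countable :=
  hu.countable_of_isOpen (fun _ _ => Metric.isOpen_ball)
    fun a ha => ⟨a.1, Metric.mem_ball_self (NNReal.coe_pos.2 (hpos a ha))⟩

lemma hausdorffContent_le_mul_tsum {u : Set (Y × ℝ≥0)} (hu : u.Countable) {ρ M : ℝ≥0∞} {A : Set Y}
    {E : Y × ℝ≥0 → Set Y} (hA : A ⊆ ⋃ b ∈ u, E b)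
    (hE : ∀ b ∈ u, hausdorffContent h ρ (E b) ≤ M * h b.2) :
    hausdorffContent h ρ A ≤ M * ∑' b : u, h (b : Y × ℝ≥0).2 :=
  calc hausdorffContent h ρ A ≤ ∑' b : u, hausdorffContent h ρ (E b) :=
        (measure_mono hA).trans (measure_biUnion_le _ hu E)
    _ ≤ ∑' b : u, M * h (b : Y × ℝ≥0).2 := ENNReal.tsum_le_tsum fun b => hE b b.2
    _ = M * ∑' b : u, h (b : Y × ℝ≥0).2 := ENNReal.tsum_mul_left

lemma ediam_closedBall_le_of_isUltrametricDist [IsUltrametricDist Y] (x : Y) (r : ℝ≥0) :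
    Metric.ediam (Metric.closedBall x (r : ℝ)) ≤ r := by
  refine Metric.ediam_le fun y hy z hz => ?_
  rw [edist_nndist]
  exact_mod_cast (dist_triangle_max y x z).trans (max_le hy (Metric.mem_closedBall'.1 hz))

lemma exists_isGreatest_map_le_two_mul (hcont : Continuous h) (h0 : h 0 = 0) (r δ : ℝ≥0) :
    ∃ R, IsGreatest {s | s ≤ δ ∧ h s ≤ 2 * h r} R :=
  (isCompact_Icc.inter_right (isClosed_le hcont continuous_const) :
    IsCompact (Icc 0 δ ∩ {s | h s ≤ 2 * h r})).exists_isGreatest ⟨0, by simp [h0]⟩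
    |>.imp fun R hR => by simpa [inter_def] using hR

variable [TopologicalSpace.SeparableSpace Y]

lemma hasVitaliCovering_of_hausdorffContent_ball_le {M : ℝ≥0∞} (hM : M ≠ ⊤)
    (hball : ∀ᶠ r : ℝ≥0 in 𝓝[>] 0, ∀ x : Y,
      hausdorffContent h (8 * r : ℝ≥0) (Metric.ball x (4 * r : ℝ)) ≤ M * h r) :
    HasVitaliCovering Y h := by
  obtain ⟨σ, hσ, hball⟩ :=
    exists_pos_forall_le_of_eventually (eventually_nhdsWithin_iff.1 hball)
  refine ⟨M, hM, fun ρ hρ => ?_⟩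
  filter_upwards [Iic_mem_nhds (lt_min hσ (div_pos hρ (by simp : (0 : ℝ≥0) < 8)))] with δ hδ t ht
  obtain ⟨u, hut, hu, hcover⟩ := Vitali.exists_disjoint_subfamily_covering_enlargement_ball t
    (fun a => a.1) (fun a => (a.2 : ℝ)) δ (fun a ha => NNReal.coe_le_coe.2 (ht a ha).2) 4
    (by norm_num)
  refine ⟨u, hut, hu, hausdorffContent_le_mul_tsum
    (countable_of_pairwiseDisjoint_ball hu fun a ha => (ht a (hut ha)).1)
    (E := fun b => Metric.ball b.1 (4 * b.2 : ℝ)) ?_ fun b hb => ?_⟩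
  · rintro _ ⟨a, ha, rfl⟩
    obtain ⟨b, hb, hab⟩ := hcover a ha
    exact mem_biUnion hb (hab (Metric.mem_ball_self (NNReal.coe_pos.2 (ht a ha).1)))
  · obtain ⟨hb₀, hbδ⟩ := ht b (hut hb)
    have hbρ : 8 * b.2 ≤ ρ := by
      rw [mul_comm, ← le_div_iff₀ (by simp)]
      exact hbδ.trans (hδ.trans (min_le_right _ _))
    exact (hausdorffContent_anti (by exact_mod_cast hbρ) _).trans
      (hball b.2 (hbδ.trans (hδ.trans (min_le_left _ _))) hb₀ b.1)

lemma FiniteOrder.hasVitaliCovering (hfo : FiniteOrder h) (hh : Monotone h) :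
    HasVitaliCovering Y h := by
  obtain ⟨M, hM_top, hM⟩ := hfo.exists_eventually_map_nine_mul_le
  refine hasVitaliCovering_of_hausdorffContent_ball_le hM_top (hM.mono fun r hr x => ?_)
  calc hausdorffContent h (8 * r : ℝ≥0) (Metric.ball x (4 * r : ℝ)) ≤ h (8 * r) :=
        hausdorffContent_le hh (ediam_ball_four_mul_le x r)
    _ ≤ h (9 * r) := hh (by gcongr; norm_num)
    _ ≤ M * h r := hr

lemma FiniteStructuralDim.hasVitaliCovering (hY : FiniteStructuralDim Y) (hh : Monotone h) :
    HasVitaliCovering Y h := by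
  obtain ⟨N, δ₀, hδ₀, hN⟩ := hY (1 / 8) (by norm_num)
  refine hasVitaliCovering_of_hausdorffContent_ball_le (M := N) (by simp)
    (mem_nhdsWithin_of_mem_nhds (mem_of_superset
      (Iic_mem_nhds (div_pos hδ₀ (by simp : (0 : ℝ≥0) < 8))) fun r hr x => ?_))
  have hrδ₀ : 8 * r ≤ δ₀ := by rwa [mul_comm, ← le_div_iff₀ (by simp)]
  obtain ⟨U, hxU, hU⟩ := hN (Metric.ball x (4 * r : ℝ))
    ((ediam_ball_four_mul_le x r).trans (by exact_mod_cast hrδ₀))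
  have hUr : ∀ i, Metric.ediam (U i) ≤ r := fun i =>
    calc Metric.ediam (U i) ≤ (1 / 8 : ℝ≥0) * Metric.ediam (Metric.ball x (4 * r : ℝ)) := hU i
      _ ≤ (1 / 8 : ℝ≥0) * (8 * r : ℝ≥0) := by gcongr; exact ediam_ball_four_mul_le x r
      _ = r := by rw [← ENNReal.coe_mul, ← mul_assoc]; norm_num
  calc hausdorffContent h (8 * r : ℝ≥0) (Metric.ball x (4 * r : ℝ))
      ≤ hausdorffContent h r (Metric.ball x (4 * r : ℝ)) :=
        hausdorffContent_anti (by exact_mod_cast le_mul_of_one_le_left' (by norm_num)) _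
    _ ≤ ∑ i, hausdorffContent h r (U i) :=
        (measure_mono hxU).trans (measure_iUnion_fintype_le _ U)
    _ ≤ ∑ _i : Fin N, h r := Finset.sum_le_sum fun i _ => hausdorffContent_le hh (hUr i)
    _ = N * h r := by simp

/- The disjoint balls are selected by the size of `h r` instead of `r`, so that no growth condition
on `h` is needed. -/
lemma hasVitaliCovering_of_isUltrametricDist [IsUltrametricDist Y] (hh : Monotone h)
    (hcont : Continuous h) (h0 : h 0 = 0) : HasVitaliCovering Y h := by
  refine ⟨2, by simp, fun ρ hρ => ?_⟩
  filter_upwards [eventually_lt_top_of_map_zero hcont h0, Iic_mem_nhds hρ] with δ hδ hδρ t ht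
  have hfin : ∀ a ∈ t, h a.2 ≠ ⊤ := fun a ha => ((hh (ht a ha).2).trans_lt hδ).ne
  have hmem : ∀ a ∈ t, a.1 ∈ Metric.ball a.1 (a.2 : ℝ) := fun a ha =>
    Metric.mem_ball_self (NNReal.coe_pos.2 (ht a ha).1)
  obtain ⟨u, hut, hu, hcover⟩ := Vitali.exists_disjoint_subfamily_covering_enlargement
    (fun a : Y × ℝ≥0 => Metric.ball a.1 (a.2 : ℝ)) t (fun a => (h a.2).toReal) 2 one_lt_two
    (fun a _ => ENNReal.toReal_nonneg) (h δ).toReal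
    (fun a ha => ENNReal.toReal_mono hδ.ne (hh (ht a ha).2)) fun a ha => ⟨a.1, hmem a ha⟩
  choose R hR using fun r => exists_isGreatest_map_le_two_mul hcont h0 r δ
  refine ⟨u, hut, hu, hausdorffContent_le_mul_tsum
    (countable_of_pairwiseDisjoint_ball hu fun a ha => (ht a (hut ha)).1)
    (E := fun b => Metric.closedBall b.1 (R b.2)) ?_ fun b _ => ?_⟩
  · rintro _ ⟨a, ha, rfl⟩
    obtain ⟨b, hb, ⟨z, hza, hzb⟩, hab⟩ := hcover a ha
    have haR : a.2 ≤ R b.2 := (hR b.2).2 ⟨(ht a ha).2, by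
      rw [← ENNReal.toReal_le_toReal (hfin a ha) (by have := hfin b (hut hb); finiteness)]
      simpa using hab⟩
    have hbR : b.2 ≤ R b.2 := (hR b.2).2 ⟨(ht b (hut hb)).2, by rw [two_mul]; exact le_self_add⟩
    refine mem_biUnion hb ((dist_triangle_max a.1 z b.1).trans (max_le ?_ ?_))
    · exact (Metric.mem_ball'.1 hza).le.trans (NNReal.coe_le_coe.2 haR)
    · exact (Metric.mem_ball.1 hzb).le.trans (NNReal.coe_le_coe.2 hbR)
  · calc hausdorffContent h ρ (Metric.closedBall b.1 (R b.2 : ℝ))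
        ≤ hausdorffContent h (R b.2) (Metric.closedBall b.1 (R b.2 : ℝ)) :=
          hausdorffContent_anti (by exact_mod_cast (hR b.2).1.1.trans hδρ) _
      _ ≤ h (R b.2) := hausdorffContent_le hh (ediam_closedBall_le_of_isUltrametricDist _ _)
      _ ≤ 2 * h b.2 := (hR b.2).1.2

lemma hasVitaliCovering_of_alternatives (hh : Monotone h) (hcont : Continuous h) (h0 : h 0 = 0)
    (halt : FiniteOrder h ∨ FiniteStructuralDim Y ∨
      ∀ x y z : Y, dist x z ≤ max (dist x y) (dist y z)) : HasVitaliCovering Y h := by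
  obtain hfo | hdim | hultra := halt
  · exact hfo.hasVitaliCovering hh
  · exact hdim.hasVitaliCovering hh
  · have : IsUltrametricDist Y := ⟨hultra⟩
    exact hasVitaliCovering_of_isUltrametricDist hh hcont h0

end VitaliCovering

/-- The points centring a ball of radius below `δ` and of `ν`-measure larger than `h r / c`. -/
def largeBallSet {Y : Type*} [PseudoMetricSpace Y] [MeasurableSpace Y] (ν : Measure Y)
    (h : ℝ≥0 → ℝ≥0∞) (c δ : ℝ≥0) : Set Y :=
  {x | ∃ r ∈ Ioo 0 δ, h r < c * ν (Metric.ball x r)}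

/-- The points centring arbitrarily small balls of `ν`-measure larger than `h r / c`. With `c`
increasing to infinity these sets exhaust the points of positive upper `h`-density. -/
def upperDensitySet {Y : Type*} [PseudoMetricSpace Y] [MeasurableSpace Y] (ν : Measure Y)
    (h : ℝ≥0 → ℝ≥0∞) (c : ℝ≥0) : Set Y :=
  {x | ∃ᶠ r : ℝ≥0 in 𝓝[>] 0, h r < c * ν (Metric.ball x r)}

section Density

lemma isOpen_setOf_lt_measure_ball {Y : Type*} [PseudoMetricSpace Y] [MeasurableSpace Y]
    (ν : Measure Y) (t : ℝ≥0∞) (r : ℝ) : IsOpen {x | t < ν (Metric.ball x r)} := by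
  refine Metric.isOpen_iff.2 fun x hx => ?_
  obtain ⟨s, hs_mono, hs, hs_lim⟩ := exists_seq_strictMono_tendsto r
  have hunion : ⋃ n, Metric.ball x (s n) = Metric.ball x r :=
    (iUnion_subset fun n => Metric.ball_subset_ball (hs n).le).antisymm fun y hy =>
      mem_iUnion.2 (hs_lim.eventually (lt_mem_nhds (Metric.mem_ball.1 hy))).exists
  have hlt : t < ⨆ n, ν (Metric.ball x (s n)) := by
    rwa [← Monotone.measure_iUnion fun i j hij => Metric.ball_subset_ball (hs_mono.monotone hij),
      hunion]
  obtain ⟨n, hn⟩ := lt_iSup_iff.1 hlt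
  refine ⟨r - s n, sub_pos.2 (hs n), fun y hy => hn.trans_le (measure_mono ?_)⟩
  exact Metric.ball_subset_ball' (by linarith [Metric.mem_ball'.1 hy])

variable {Y : Type*} [MetricSpace Y] [MeasurableSpace Y] {ν : Measure Y} {h : ℝ≥0 → ℝ≥0∞}

lemma isOpen_largeBallSet (c δ : ℝ≥0) : IsOpen (largeBallSet ν h c δ) := by
  have hball : ∀ r : ℝ≥0, IsOpen {x | h r < c * ν (Metric.ball x r)} := fun r => by
    simpa using isOpen_setOf_lt_measure_ball (c • ν) (h r) r
  simpa only [largeBallSet, ofPred_exists, ofPred_and, ← exists_prop] using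
    isOpen_biUnion fun r (_ : r ∈ Ioo 0 δ) => hball r

lemma monotone_largeBallSet (c : ℝ≥0) : Monotone (largeBallSet ν h c) :=
  fun _ _ hδ _ ⟨r, hr, hlt⟩ => ⟨r, Ioo_subset_Ioo_right hδ hr, hlt⟩

lemma mem_upperDensitySet_iff {c : ℝ≥0} {x : Y} :
    x ∈ upperDensitySet ν h c ↔ ∀ δ, 0 < δ → x ∈ largeBallSet ν h c δ :=
  (nhdsGT_basis 0).frequently_iff

lemma upperDensitySet_eq_iInter (c : ℝ≥0) :
    upperDensitySet ν h c = ⋂ m : ℕ, largeBallSet ν h c (1 / (m + 1)) := by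
  ext x
  refine mem_upperDensitySet_iff.trans (Iff.trans ?_ mem_iInter.symm)
  refine ⟨fun hx m => hx _ (by positivity), fun hx δ hδ => ?_⟩
  obtain ⟨m, hm⟩ := ((tendsto_one_div_add_atTop_nhds_zero_nat (𝕜 := ℝ≥0)).eventually
    (ge_mem_nhds hδ)).exists
  exact monotone_largeBallSet c hm (hx m)

lemma measurableSet_upperDensitySet [OpensMeasurableSpace Y] (c : ℝ≥0) :
    MeasurableSet (upperDensitySet ν h c) := by
  rw [upperDensitySet_eq_iInter]
  exact MeasurableSet.iInter fun m => (isOpen_largeBallSet c _).measurableSet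

lemma HasVitaliCovering.hausdorffM_upperDensitySet_lt_top [TopologicalSpace.SeparableSpace Y]
    [OpensMeasurableSpace Y] [IsFiniteMeasure ν] (hY : HasVitaliCovering Y h) (c : ℝ≥0) :
    hausdorffM h (upperDensitySet ν h c) < ⊤ := by
  obtain ⟨M, hM_top, hM⟩ := hY
  suffices hausdorffM h (upperDensitySet ν h c) ≤ M * (c * ν univ) from
    this.trans_lt (by finiteness)
  refine hausdorffM_le_of_forall_hausdorffContent_le fun ρ hρ => ?_
  obtain ⟨δ, hδ, hcover⟩ := exists_pos_forall_le_of_eventually (hM ρ hρ)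
  obtain ⟨u, hut, hu, hle⟩ := hcover δ le_rfl
    {a | a.2 ∈ Ioc 0 δ ∧ h a.2 < c * ν (Metric.ball a.1 a.2)} fun a ha => ha.1
  have : Countable u := (countable_of_pairwiseDisjoint_ball hu fun a ha => (hut ha).1.1).to_subtype
  calc hausdorffContent h ρ (upperDensitySet ν h c)
      ≤ M * ∑' b : u, h (b : Y × ℝ≥0).2 := by
        refine (measure_mono fun x hx => ?_).trans hle
        obtain ⟨r, hr, hlt⟩ := mem_upperDensitySet_iff.1 hx δ hδ
        exact ⟨(x, r), ⟨Ioo_subset_Ioc_self hr, hlt⟩, rfl⟩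
    _ ≤ M * ∑' b : u, c * ν (Metric.ball (b : Y × ℝ≥0).1 (b : Y × ℝ≥0).2) := by
        gcongr with b
        exact (hut b.2).2.le
    _ ≤ M * (c * ν univ) := by
        rw [ENNReal.tsum_mul_left]
        gcongr
        exact tsum_measure_le_measure_univ
          (fun b => Metric.isOpen_ball.measurableSet.nullMeasurableSet)
          fun a b hab => (hu a.2 b.2 (Subtype.coe_injective.ne hab)).aedisjoint

lemma mul_measure_inter_le_of_disjoint_largeBallSet {c d δ : ℝ≥0} {K U : Set Y}
    (hK : Disjoint K (largeBallSet ν h c δ)) (hcont : ContinuousWithinAt h (Ioi d) d) (hd : d < δ)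
    (hU : Metric.ediam U ≤ d) : c * ν (U ∩ K) ≤ h d := by
  rcases (U ∩ K).eq_empty_or_nonempty with hempty | ⟨x, hxU, hxK⟩
  · simp [hempty]
  refine ge_of_tendsto hcont.tendsto ?_
  filter_upwards [Ioo_mem_nhdsGT hd] with r hr
  have hball : c * ν (Metric.ball x r) ≤ h r := not_lt.1 fun hlt =>
    disjoint_left.1 hK hxK ⟨r, ⟨pos_of_gt hr.1, hr.2⟩, hlt⟩
  refine le_trans ?_ hball
  gcongr
  rintro y ⟨hyU, -⟩
  have hyx : edist y x < r := (Metric.edist_le_ediam_of_mem hyU hxU).trans_lt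
    (hU.trans_lt (ENNReal.coe_lt_coe.2 hr.1))
  rwa [edist_nndist, ENNReal.coe_lt_coe] at hyx

lemma isLittleOGauge_restrict_of_disjoint_largeBallSet {K : Set Y}
    (hK : MeasurableSet K) (hcont : Continuous h) {δ : ℕ → ℝ≥0} (hδ : ∀ n, 0 < δ n)
    (hdisj : ∀ n : ℕ, Disjoint K (largeBallSet ν h n (δ n))) :
    IsLittleOGauge (ν.restrict K) h := by
  intro c
  obtain ⟨n, hn⟩ := exists_nat_ge c
  filter_upwards [Iio_mem_nhds (hδ n)] with d hd U hU
  calc c * ν.restrict K U ≤ (n : ℝ≥0) * ν (U ∩ K) := by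
        rw [Measure.restrict_apply' hK]
        gcongr
    _ ≤ h d := mul_measure_inter_le_of_disjoint_largeBallSet (hdisj n)
        hcont.continuousWithinAt hd hU

lemma exists_measure_sdiff_iUnion_ne_zero {α : Type*} [MeasurableSpace α] {κ : Measure α}
    [IsFiniteMeasure κ] {W : Set α} (hW : MeasurableSet W) (hκW : κ W ≠ 0) {V : ℕ → ℕ → Set α}
    (hV : ∀ n m, MeasurableSet (V n m)) (hanti : ∀ n, Antitone (V n))
    (hdisj : ∀ n, Disjoint W (⋂ m, V n m)) : ∃ m : ℕ → ℕ, κ (W \ ⋃ n, V n (m n)) ≠ 0 := by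
  obtain ⟨e, he₀, he⟩ := ENNReal.exists_pos_sum_of_countable' hκW ℕ
  have hsmall : ∀ n, ∃ m, κ (W ∩ V n m) < e n := fun n => by
    have hlim := tendsto_measure_iInter_atTop (μ := κ)
      (fun m => (hW.inter (hV n m)).nullMeasurableSet)
      (fun i j hij => inter_subset_inter_right W (hanti n hij)) ⟨0, measure_ne_top _ _⟩
    rw [← inter_iInter, (hdisj n).inter_eq, measure_empty] at hlim
    exact (hlim.eventually (gt_mem_nhds (he₀ n))).exists
  choose m hm using hsmall
  refine ⟨m, fun hzero => he.not_ge ?_⟩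
  calc κ W ≤ κ (W ∩ ⋃ n, V n (m n)) + κ (W \ ⋃ n, V n (m n)) := measure_le_inter_add_sdiff κ W _
    _ = κ (⋃ n, W ∩ V n (m n)) := by rw [hzero, add_zero, inter_iUnion]
    _ ≤ ∑' n, κ (W ∩ V n (m n)) := measure_iUnion_le _
    _ ≤ ∑' n, e n := ENNReal.tsum_le_tsum fun n => (hm n).le

theorem measure_eq_zero_of_disjoint_upperDensitySet [TopologicalSpace.SeparableSpace Y]
    [BorelSpace Y] [IsFiniteMeasure ν] (hcont : Continuous h) (h0 : h 0 = 0)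
    (hpos : ∀ d, 0 < d → 0 < h d) {C W : Set Y} (hC : IsCompact C) (hWC : W ⊆ C)
    (hW : MeasurableSet W) (hdens : ∀ n : ℕ, Disjoint W (upperDensitySet ν h n))
    (hnull : ∀ L ⊆ W, ν L = 0 → hausdorffM h L = 0) : ν W = 0 := by
  by_contra hνW
  obtain ⟨m, hm⟩ := exists_measure_sdiff_iUnion_ne_zero (κ := ν) hW hνW
    (V := fun n m => largeBallSet ν h n (1 / (m + 1)))
    (fun n m => (isOpen_largeBallSet _ _).measurableSet)
    (fun n i j hij => monotone_largeBallSet _ (by gcongr))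
    fun n => by simpa only [← upperDensitySet_eq_iInter] using hdens n
  have hmeas : MeasurableSet (W \ ⋃ n : ℕ, largeBallSet ν h n (1 / (m n + 1))) :=
    hW.diff (MeasurableSet.iUnion fun n => (isOpen_largeBallSet _ _).measurableSet)
  obtain ⟨K, hKW, hK_closed, hνK⟩ :=
    hmeas.exists_lt_isClosed_of_ne_top (measure_ne_top ν _) (pos_iff_ne_zero.2 hm)
  have hK : IsCompact K := hC.of_isClosed_subset hK_closed (hKW.trans (sdiff_subset.trans hWC))
  have hlittle : IsLittleOGauge (ν.restrict K) h :=
    isLittleOGauge_restrict_of_disjoint_largeBallSet hK.measurableSet hcont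
      (δ := fun n => 1 / (m n + 1)) (fun n => by positivity) fun n =>
      disjoint_sdiff_left.mono hKW (subset_iUnion_of_subset n subset_rfl)
  obtain ⟨L, hLK, hνL, hL⟩ := hlittle.exists_null_subset_hausdorffM_ne_zero hcont h0 hpos hK
    (by simpa using hνK.ne')
  rw [Measure.restrict_eq_self ν hLK] at hνL
  exact hL (hnull L (hLK.trans (hKW.trans sdiff_subset)) hνL)

end Density

section Analytic

lemma exists_setOf_forall_lt_le_subset_of_isOpen {b : ℕ → ℕ} {V : Set (ℕ → ℕ)} (hV : IsOpen V)
    (hbV : Iic b ⊆ V) : ∃ k, {x | ∀ i < k, x i ≤ b i} ⊆ V := by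
  let := PiNat.metricSpaceNatNat
  have hcompact : IsCompact (Iic b) := Icc_bot (a := b) ▸ isCompact_Icc
  obtain ⟨δ, hδ, hδV⟩ := hcompact.exists_thickening_subset_open hV hbV
  obtain ⟨k, hk⟩ := exists_pow_lt_of_lt_one hδ one_half_lt_one
  refine ⟨k, fun x hx => hδV (Metric.mem_thickening_iff.2
    ⟨x ⊓ b, mem_Iic.2 inf_le_right, lt_of_le_of_lt ?_ hk⟩)⟩
  exact PiNat.mem_cylinder_iff_dist_le.1 fun i hi => (min_eq_left (hx i hi)).symm

variable {α : Type*} [MeasurableSpace α] {ν : Measure α} [IsFiniteMeasure ν] {g : (ℕ → ℕ) → α}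

lemma exists_measure_image_le_image_inter_add (T : Set (ℕ → ℕ)) (k : ℕ) {e : ℝ≥0∞} (he : e ≠ 0) :
    ∃ m, ν (g '' T) ≤ ν (g '' (T ∩ {x | x k ≤ m})) + e := by
  have hmono : Monotone fun m => g '' (T ∩ {x | x k ≤ m}) := fun i j hij =>
    image_mono (inter_subset_inter_right T fun x hx => le_trans hx hij)
  have hunion : ⋃ m, g '' (T ∩ {x | x k ≤ m}) = g '' T := by
    rw [← image_iUnion, ← inter_iUnion, iUnion_eq_univ_iff.2 fun x => ⟨x k, le_refl (x k)⟩,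
      inter_univ]
  have hlim := (tendsto_measure_iUnion_atTop (μ := ν) hmono).add_const e
  rw [hunion] at hlim
  obtain ⟨m, hm⟩ := (hlim.eventually
    (lt_mem_nhds (ENNReal.lt_add_right (measure_ne_top ν (g '' T)) he))).exists
  exact ⟨m, hm.le⟩

lemma exists_forall_measure_range_le_image_add {ε : ℝ≥0∞} (hε : ε ≠ 0) :
    ∃ b : ℕ → ℕ, ∀ k, ν (range g) ≤ ν (g '' {x | ∀ i < k, x i ≤ b i}) + ε := by
  obtain ⟨e, he₀, he⟩ := ENNReal.exists_pos_sum_of_countable' hε ℕ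
  choose m hm using fun T k =>
    exists_measure_image_le_image_inter_add (ν := ν) (g := g) T k (he₀ k).ne'
  let T : ℕ → Set (ℕ → ℕ) := Nat.rec univ fun k T => T ∩ {x | x k ≤ m T k}
  have hT : ∀ k, T k = {x | ∀ i < k, x i ≤ m (T i) i} := fun k => by
    induction k with
    | zero => simp [T]
    | succ k ih =>
      change T k ∩ {x | x k ≤ m (T k) k} = _
      ext x
      simp only [ih, mem_inter_iff, mem_ofPred_eq, Nat.forall_lt_succ_right]
  have hsum : ∀ k, ν (range g) ≤ ν (g '' T k) + ∑ i ∈ Finset.range k, e i := fun k => by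
    induction k with
    | zero => simp [T]
    | succ k ih =>
      calc ν (range g) ≤ ν (g '' T k) + ∑ i ∈ Finset.range k, e i := ih
        _ ≤ ν (g '' T (k + 1)) + e k + ∑ i ∈ Finset.range k, e i := by gcongr; exact hm (T k) k
        _ = ν (g '' T (k + 1)) + ∑ i ∈ Finset.range (k + 1), e i := by
          rw [Finset.sum_range_succ]; ring
  refine ⟨fun i => m (T i) i, fun k => ?_⟩
  rw [← hT k]
  exact (hsum k).trans (by gcongr; exact (ENNReal.sum_le_tsum _).trans he.le)

variable [TopologicalSpace α]

/- The sets `g '' {x | ∀ i < k, x i ≤ b i}` need not be measurable, so `ν` may fail to be continuous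
from above along them; by compactness of `Iic b` one of them lies in any open superset of
`g '' Iic b`, which outer regularity makes good enough. -/
lemma exists_isCompact_measure_range_le_add [ν.OuterRegular] (hg : Continuous g) {ε : ℝ≥0∞}
    (hε : ε ≠ 0) : ∃ C ⊆ range g, IsCompact C ∧ ν (range g) ≤ ν C + ε := by
  have hε' : ε / 2 ≠ 0 := (ENNReal.half_pos hε).ne'
  obtain ⟨b, hb⟩ := exists_forall_measure_range_le_image_add (ν := ν) (g := g) hε'
  have hcompact : IsCompact (Iic b) := Icc_bot (a := b) ▸ isCompact_Icc
  refine ⟨g '' Iic b, image_subset_range _ _, hcompact.image hg, ?_⟩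
  obtain ⟨V, hCV, hV, hνV⟩ := (g '' Iic b).exists_isOpen_lt_add (μ := ν)
    (measure_ne_top ν _) hε'
  obtain ⟨k, hk⟩ :=
    exists_setOf_forall_lt_le_subset_of_isOpen (hV.preimage hg) (image_subset_iff.1 hCV)
  calc ν (range g) ≤ ν (g '' {x | ∀ i < k, x i ≤ b i}) + ε / 2 := hb k
    _ ≤ ν V + ε / 2 := by gcongr; exact image_subset_iff.2 hk
    _ ≤ ν (g '' Iic b) + ε / 2 + ε / 2 := by gcongr
    _ = ν (g '' Iic b) + ε := by rw [add_assoc, ENNReal.add_halves]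

theorem exists_isCompact_measure_analyticSet_sdiff_iUnion_eq_zero [T2Space α]
    [OpensMeasurableSpace α] [ν.OuterRegular] {A : Set α} (hA : AnalyticSet A) :
    ∃ C : ℕ → Set α, (∀ n, IsCompact (C n)) ∧ (∀ n, C n ⊆ A) ∧ ν (A \ ⋃ n, C n) = 0 := by
  rw [AnalyticSet] at hA
  obtain rfl | ⟨g, hg, rfl⟩ := hA
  · exact ⟨fun _ => ∅, fun _ => isCompact_empty, fun _ => subset_rfl, by simp⟩
  choose C hCA hC hνC using fun n : ℕ =>
    exists_isCompact_measure_range_le_add (ν := ν) hg (ε := (n : ℝ≥0∞)⁻¹) (by simp)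
  refine ⟨C, hC, hCA, ?_⟩
  rw [measure_sdiff (iUnion_subset hCA)
    (MeasurableSet.iUnion fun n => (hC n).measurableSet).nullMeasurableSet (measure_ne_top _ _),
    tsub_eq_zero_iff_le]
  have hlim : Tendsto (fun n : ℕ => ν (⋃ n, C n) + (n : ℝ≥0∞)⁻¹) atTop (𝓝 (ν (⋃ n, C n))) := by
    simpa using ENNReal.tendsto_inv_nat_nhds_zero.const_add (ν (⋃ n, C n))
  refine ge_of_tendsto' hlim fun n => (hνC n).trans ?_
  gcongr
  exact subset_iUnion C n

end Analytic

section SigmaFinite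

lemma isCaratheodory_of_null {α : Type*} {μ : OuterMeasure α} {s : Set α} (hs : μ s = 0) :
    μ.IsCaratheodory s :=
  (OuterMeasure.isCaratheodory_iff_le' μ).2 fun t => by
    rw [measure_mono_null inter_subset_right hs, zero_add]
    exact measure_mono sdiff_subset

lemma sigmaFiniteSet_of_null_sdiff_iUnion {α : Type*} {μ : OuterMeasure α} {A : Set α}
    {P : ℕ → Set α} (hP : ∀ n, μ.IsCaratheodory (P n)) (hμP : ∀ n, μ (P n) < ⊤)
    (hPA : ∀ n, P n ⊆ A) (hnull : μ (A \ ⋃ n, P n) = 0) : SigmaFiniteSet μ A := by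
  refine ⟨fun n => P n ∪ (A \ ⋃ n, P n), fun n => ⟨?_, ?_⟩, ?_⟩
  · exact OuterMeasure.isCaratheodory_union μ (hP n) (isCaratheodory_of_null hnull)
  · exact (measure_union_le _ _).trans_lt (by simpa [hnull] using hμP n)
  · rw [← iUnion_union, union_sdiff_cancel (iUnion_subset hPA)]

lemma isCaratheodory_hausdorffM {Y : Type*} [EMetricSpace Y] [MeasurableSpace Y] [BorelSpace Y]
    (h : ℝ≥0 → ℝ≥0∞) {s : Set Y} (hs : MeasurableSet s) : (hausdorffM h).IsCaratheodory s :=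
  (OuterMeasure.mkMetric'_isMetric _).le_caratheodory s hs

variable {Y : Type*} [MetricSpace Y] [TopologicalSpace.SeparableSpace Y] {h : ℝ≥0 → ℝ≥0∞}

theorem sigmaFiniteSet_hausdorffM_of_analyticSet [MeasurableSpace Y] [BorelSpace Y]
    {ν : Measure Y} [IsFiniteMeasure ν] (hY : HasVitaliCovering Y h) (hcont : Continuous h)
    (h0 : h 0 = 0) (hpos : ∀ d, 0 < d → 0 < h d) {A : Set Y} (hA : AnalyticSet A)
    (hnull : ∀ L ⊆ A, ν L = 0 → hausdorffM h L = 0) : SigmaFiniteSet (hausdorffM h) A := by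
  obtain ⟨C, hC, hCA, hνC⟩ := exists_isCompact_measure_analyticSet_sdiff_iUnion_eq_zero (ν := ν) hA
  set D : ℕ → Set Y := fun n => upperDensitySet ν h n
  have hD : ∀ n, MeasurableSet (D n) := fun n => measurableSet_upperDensitySet _
  have hsparse : ∀ k, ν (C k \ ⋃ n, D n) = 0 := fun k =>
    measure_eq_zero_of_disjoint_upperDensitySet hcont h0 hpos (hC k) sdiff_subset
      ((hC k).measurableSet.diff (MeasurableSet.iUnion hD))
      (fun n => disjoint_sdiff_left.mono_right (subset_iUnion D n))
      fun L hL => hnull L (hL.trans (sdiff_subset.trans (hCA k)))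
  have hrest : ν (A \ ⋃ n, (⋃ k, C k) ∩ D n) = 0 := by
    have hsub : A \ ⋃ n, (⋃ k, C k) ∩ D n ⊆ (A \ ⋃ k, C k) ∪ ⋃ k, C k \ ⋃ n, D n := by
      rw [← inter_iUnion, ← iUnion_sdiff]
      rintro x ⟨hxA, hx⟩
      by_cases hxC : x ∈ ⋃ k, C k
      · exact .inr ⟨hxC, fun hxD => hx ⟨hxC, hxD⟩⟩
      · exact .inl ⟨hxA, hxC⟩
    exact measure_mono_null hsub (measure_union_null hνC (measure_iUnion_null hsparse))
  refine sigmaFiniteSet_of_null_sdiff_iUnion (fun n => isCaratheodory_hausdorffM h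
    ((MeasurableSet.iUnion fun k => (hC k).measurableSet).inter (hD n))) (fun n => ?_)
    (fun n => inter_subset_left.trans (iUnion_subset hCA)) (hnull _ sdiff_subset hrest)
  exact (measure_mono inter_subset_right).trans_lt (hY.hausdorffM_upperDensitySet_lt_top _)

end SigmaFinite

lemma analyticSet_range_of_measurable {X Y : Type*} [TopologicalSpace X] [MeasurableSpace X]
    [BorelSpace X] [TopologicalSpace Y] [SecondCountableTopology Y] [MeasurableSpace Y]
    [OpensMeasurableSpace Y] (hX : AnalyticSet (univ : Set X)) {f : X → Y} (hf : Measurable f) :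
    AnalyticSet (range f) := by
  rw [AnalyticSet] at hX
  obtain hX | ⟨g, hg, hgX⟩ := hX
  · simpa [← image_univ, hX] using analyticSet_empty
  · rw [← image_univ, ← hgX, ← range_comp, ← image_univ]
    exact MeasurableSet.univ.analyticSet_image (hf.comp hg.measurable)

theorem statement_19_general {X : Type*} [TopologicalSpace X]
    (hXan : MeasureTheory.AnalyticSet (Set.univ : Set X))
    (μ : MeasureTheory.OuterMeasure X)
    (hBorel : ∀ B : Set X, MeasurableSet[borel X] B → μ.IsCaratheodory B)
    (hfin : μ Set.univ < ⊤)
    {Y : Type*} [MetricSpace Y] [TopologicalSpace.SeparableSpace Y]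
    (h : ℝ≥0 → ℝ≥0∞) (hh : IsHausdorffFunction h) (hcont : Continuous h) (h0 : h 0 = 0)
    (halt : FiniteOrder h ∨ FiniteStructuralDim Y ∨
      ∀ x y z : Y, dist x z ≤ max (dist x y) (dist y z))
    (f : X → Y)
    (hfBorel : ∀ O : Set Y, IsOpen O → MeasurableSet[borel X] (f ⁻¹' O))
    (hLuzinN : ∀ N : Set X, μ N = 0 → hausdorffM h (f '' N) = 0) :
    SigmaFiniteSet (hausdorffM h) (Set.range f) := by
  borelize X Y
  have hf : Measurable f := measurable_of_isOpen hfBorel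
  have : SecondCountableTopology Y := UniformSpace.secondCountable_of_separable Y
  have : IsFiniteMeasure (μ.toMeasure hBorel) :=
    ⟨by rwa [toMeasure_apply μ hBorel MeasurableSet.univ]⟩
  refine sigmaFiniteSet_hausdorffM_of_analyticSet (ν := (μ.toMeasure hBorel).map f)
    (hasVitaliCovering_of_alternatives hh.mono hcont h0 halt) hcont h0 hh.pos
    (analyticSet_range_of_measurable hXan hf) fun L hL hνL => ?_
  have hμL : μ (f ⁻¹' L) = 0 := nonpos_iff_eq_zero.1 <|
    calc μ (f ⁻¹' L) ≤ μ.toMeasure hBorel (f ⁻¹' L) := le_toMeasure_apply μ hBorel _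
      _ ≤ (μ.toMeasure hBorel).map f L := Measure.le_map_apply hf.aemeasurable L
      _ = 0 := hνL
  simpa [image_preimage_eq_of_subset hL] using hLuzinN _ hμL

/-- Theorem `Rigidity`. -/
theorem statement_19 {X : Type*} [TopologicalSpace X] [T2Space X]
    (hXan : MeasureTheory.AnalyticSet (Set.univ : Set X))
    (μ : MeasureTheory.OuterMeasure X)
    (hBorel : ∀ B : Set X, MeasurableSet[borel X] B → μ.IsCaratheodory B)
    (hfin : μ Set.univ < ⊤)
    {Y : Type*} [MetricSpace Y] [CompleteSpace Y] [TopologicalSpace.SeparableSpace Y]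
    (h : ℝ≥0 → ℝ≥0∞) (hh : IsHausdorffFunction h) (hcont : Continuous h) (h0 : h 0 = 0)
    (halt : FiniteOrder h ∨ FiniteStructuralDim Y ∨
      ∀ x y z : Y, dist x z ≤ max (dist x y) (dist y z))
    (f : X → Y)
    (hfBorel : ∀ O : Set Y, IsOpen O → MeasurableSet[borel X] (f ⁻¹' O))
    (hLuzinN : ∀ N : Set X, μ N = 0 → hausdorffM h (f '' N) = 0) :
    SigmaFiniteSet (hausdorffM h) (Set.range f) :=
  statement_19_general hXan μ hBorel hfin h hh hcont h0 halt f hfBorel hLuzinN
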